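/- arXiv:2012.05002 — 2 statements merged into one kernel-verified Lean document; each statement's English description precedes it below -/
import Mathlib

section
/- One-sided noise can be reduced to symmetric noise without increasing the relaxed majority value: for every finite voter set R, every δ ∈ (0,1), every profile c̄ ∈ {c0,c1}^R, every α ∈ (0,1], and every probability distribution y over {c0,c1}^R with Pr_{ỹ∼y}(ỹ_r = c1 and c̄_r = c0) ≤ α for all r ∈ R, there exists an α-noisy probability distribution y' around c̄ such that E_{ỹ∼y'}[W_δ(ỹ)] ≤ E_{ỹ∼y}[W_δ(ỹ)]. -/
/-!
Push `y` forward along the map `c ↦ c ∧ cbar`, which turns every `c0`-vote of a voter for whom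
`cbar` votes `c1` into a `c1`-vote. The image profile differs from `cbar` at `r` exactly when `c`
flips a `c0`-vote of `cbar` at `r` to `c1`, so the one-sided bound on `y` becomes the two-sided
bound on the image. The map only removes `c0`-votes, and `Wrel δ` is monotone in the set of
`c0`-voters, so the expectation does not increase.
-/

open Finset
open Finset

/-- Number of voters voting for candidate `c0` (encoded as `true`). -/
def votesFor {R : Type*} [Fintype R] (c : R → Bool) : ℕ :=
  (univ.filter (fun r => c r = true)).card

/-- The majority threshold `⌈|R|/2⌉`. -/
noncomputable def majThreshold (R : Type*) [Fintype R] : ℕ :=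
  ⌈(Fintype.card R : ℝ) / 2⌉₊

/-- The majority-voting function `W`: value `1` iff at least `⌈|R|/2⌉` voters vote `c0`. -/
noncomputable def W {R : Type*} [Fintype R] (c : R → Bool) : ℝ :=
  if majThreshold R ≤ votesFor c then 1 else 0

/-- The relaxed majority-voting function `W_δ`: value `1` iff at least
`⌈(1-δ)·⌈|R|/2⌉⌉` voters vote `c0`. -/
noncomputable def Wrel {R : Type*} [Fintype R] (δ : ℝ) (c : R → Bool) : ℝ :=
  if ⌈(1 - δ) * (majThreshold R : ℝ)⌉₊ ≤ votesFor c then 1 else 0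


/-- The image of the weight function `y` under `f`: each point receives the total weight
of its fibre. -/
def pushforward {X : Type*} [Fintype X] [DecidableEq X] (f : X → X) (y : X → ℝ) (x : X) : ℝ :=
  ∑ x' ∈ univ.filter (fun x' => f x' = x), y x'

/-- Change of variables for expectations. -/
lemma sum_pushforward_mul {X : Type*} [Fintype X] [DecidableEq X] (f : X → X) (y g : X → ℝ) :
    ∑ x, pushforward f y x * g x = ∑ x, y x * g (f x) := by
  rw [← sum_fiberwise univ f fun x => y x * g (f x)]
  refine sum_congr rfl fun x _ => ?_
  rw [pushforward, sum_mul]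
  refine sum_congr rfl fun x' hx' => ?_
  rw [(mem_filter.mp hx').2]

lemma Wrel_mono {R : Type*} [Fintype R] (δ : ℝ) {c d : R → Bool}
    (h : ∀ r, c r = true → d r = true) : Wrel δ c ≤ Wrel δ d := by
  have hv : votesFor c ≤ votesFor d := card_le_card (monotone_filter_right univ fun r _ => h r)
  unfold Wrel
  split_ifs with h₁ h₂
  · exact le_rfl
  · exact absurd (h₁.trans hv) h₂
  · exact zero_le_one
  · exact le_rfl

/-- One-sided noise can be reduced to symmetric noise without increasing the relaxed
majority value: if `y` only bounds (by `α`) the probability of flipping a `c0`-vote of `c̄`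
to `c1` (`c0` is `true`, `c1` is `false`), then there is an `α`-noisy distribution `y'`
around `c̄` with `E_{ỹ∼y'}[W_δ(ỹ)] ≤ E_{ỹ∼y}[W_δ(ỹ)]`. -/
theorem one_sided_noise_reduction {R : Type*} [Fintype R] [DecidableEq R]
    (δ α : ℝ) (hδ : δ ∈ Set.Ioo (0 : ℝ) 1) (hα : α ∈ Set.Ioc (0 : ℝ) 1)
    (cbar : R → Bool) (y : (R → Bool) → ℝ)
    (hy0 : ∀ c', 0 ≤ y c') (hy1 : ∑ c', y c' = 1)
    (hnoisy : ∀ r : R,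
      ∑ c' ∈ univ.filter (fun c' : R → Bool => c' r = false ∧ cbar r = true), y c' ≤ α) :
    ∃ y' : (R → Bool) → ℝ,
      (∀ c', 0 ≤ y' c') ∧ (∑ c', y' c' = 1) ∧
      (∀ r : R, ∑ c' ∈ univ.filter (fun c' : R → Bool => c' r ≠ cbar r), y' c' ≤ α) ∧
      ∑ c', y' c' * Wrel δ c' ≤ ∑ c', y c' * Wrel δ c' := by
  set f : (R → Bool) → (R → Bool) := fun c r => c r && cbar r with hf
  refine ⟨pushforward f y, fun c => sum_nonneg fun c' _ => hy0 c', ?_, fun r => ?_, ?_⟩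
  · have h := sum_pushforward_mul f y (fun _ => 1)
    simp only [mul_one] at h
    rw [h, hy1]
  · refine le_of_eq_of_le ?_ (hnoisy r)
    have h := sum_pushforward_mul f y (fun c => if c r ≠ cbar r then 1 else 0)
    simp only [mul_ite, mul_one, mul_zero, ← sum_filter] at h
    rw [h]
    refine sum_congr (filter_congr fun c _ => ?_) fun _ _ => rfl
    cases hc : c r <;> cases hb : cbar r <;> simp [hf, hc, hb]
  · rw [sum_pushforward_mul]
    refine sum_le_sum fun c _ => mul_le_mul_of_nonneg_left (Wrel_mono δ fun r hr => ?_) (hy0 c)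
    exact ((Bool.and_eq_true _ _).mp hr).1
end

section
/- Concentration of the empirical distribution with a probability-proportional bound: let Θ be a finite set, p* a probability distribution on Θ, ε > 0, α ∈ (0,1], and let q be a positive integer with q ≥ 32·log(4/α)/ε². Let γ̃ be the empirical distribution of q i.i.d. samples drawn from p*, i.e., γ̃_θ is the fraction of the q samples equal to θ. Then for every θ ∈ Θ it holds Pr( |γ̃_θ − p*_θ| ≥ ε/4 ) ≤ (α/2) · p*_θ. -/
/-!
Write `t = ε / 4`, `s = q t²`, `π = p θ` and `L = log (1 / π)`. The hypothesis on `q` says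
`exp (-s / 2) ≤ α / 4`, and `α ≤ 1` then forces `s ≥ 2`. Hence it suffices to bound the
probability by `2 exp (-(s / 2 + L)) = 2 π exp (-s / 2)`.

By the exponential Markov inequality (`chernoff_two_sided`), if the centred Bernoulli(`π`)
variable has moment generating function at most `exp A` at both `l` and `-l`, then the probability
is at most `2 exp (q (A - l t))`. Two choices of `l` cover all `π > 0`:

* if `L ≤ 3`, Hoeffding's lemma with `l = 4 t` gives the exponent `-2 s ≤ -(s / 2 + L)`;
* if `L ≥ 3`, the Poisson bound `A = π (exp l - 1 - l)` with `l = t L` gives the exponent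
  `-s (L - 1) ≤ -(s / 2 + L)`, because `exp (t L) - 1 - t L ≤ t² (exp L - 1 - L) ≤ t² / π`
  for `0 ≤ t ≤ 1`.

If `t > 1` the event is empty, and if `π = 0` every sample profile in the event has weight zero.
-/

open Finset

/-- The moment generating function at `l` of a centred Bernoulli variable with parameter `a`. -/
noncomputable def bernMgf (a l : ℝ) : ℝ :=
  a * Real.exp (l * (1 - a)) + (1 - a) * Real.exp (l * (0 - a))

/-- Hoeffding's lemma for a Bernoulli variable. -/
lemma bernMgf_le_hoeffding (a l : ℝ) (h0 : 0 ≤ a) (h1 : a ≤ 1) :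
    bernMgf a l ≤ Real.exp (l ^ 2 / 8) := by
  have h1' : 0 ≤ 1 - a := by linarith
  let μ : MeasureTheory.Measure ℝ :=
    ENNReal.ofReal a • MeasureTheory.Measure.dirac 1 +
      ENNReal.ofReal (1 - a) • MeasureTheory.Measure.dirac 0
  have hint : ∀ f : ℝ → ℝ, ∫ x, f x ∂μ = a * f 1 + (1 - a) * f 0 := by
    intro f
    have hi : ∀ (c x : ℝ), MeasureTheory.Integrable f
        (ENNReal.ofReal c • MeasureTheory.Measure.dirac x) := fun c x =>
      (MeasureTheory.integrable_dirac (by simp)).smul_measure ENNReal.ofReal_ne_top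
    rw [MeasureTheory.integral_add_measure (hi _ _) (hi _ _)]
    simp [MeasureTheory.integral_smul_measure, ENNReal.toReal_ofReal, h0, h1']
  have hμ : MeasureTheory.IsProbabilityMeasure μ := ⟨by
    simp only [μ, MeasureTheory.Measure.add_apply, MeasureTheory.Measure.smul_apply,
      MeasureTheory.measure_univ, smul_eq_mul, mul_one]
    rw [← ENNReal.ofReal_add h0 h1']
    simp⟩
  have hae : ∀ᵐ x ∂μ, (fun x : ℝ => x) x ∈ Set.Icc (0 : ℝ) 1 := by
    simp only [μ, MeasureTheory.ae_add_measure_iff]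
    exact ⟨MeasureTheory.Measure.ae_smul_measure (by simp) _,
      MeasureTheory.Measure.ae_smul_measure (by simp) _⟩
  have h := (ProbabilityTheory.hasSubgaussianMGF_of_mem_Icc (μ := μ)
    (X := fun x : ℝ => x) measurable_id.aemeasurable hae).mgf_le l
  rw [ProbabilityTheory.mgf, hint, hint] at h
  simp only [mul_one, mul_zero, add_zero] at h
  refine h.trans (Real.exp_le_exp.mpr (le_of_eq ?_))
  simp
  ring

/-- The moment generating function of a centred Bernoulli variable is at most that of the centred
Poisson variable with the same mean. -/
lemma bernMgf_le_poisson (a l : ℝ) :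
    bernMgf a l ≤ Real.exp (a * (Real.exp l - 1 - l)) := by
  have e1 : bernMgf a l = Real.exp (-(l * a)) * (a * (Real.exp l - 1) + 1) := by
    have : Real.exp (l * (1 - a)) = Real.exp (-(l * a)) * Real.exp l := by
      rw [← Real.exp_add]; ring_nf
    rw [bernMgf, this, zero_sub, mul_neg]
    ring
  have e2 : Real.exp (a * (Real.exp l - 1 - l))
      = Real.exp (-(l * a)) * Real.exp (a * (Real.exp l - 1)) := by
    rw [← Real.exp_add]; ring_nf
  rw [e1, e2]
  exact mul_le_mul_of_nonneg_left (Real.add_one_le_exp _) (Real.exp_pos _).le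

/-- Since `exp x - 1 - x` has a power series with nonnegative coefficients starting at degree two,
scaling the argument by `t ∈ [0, 1]` gains a factor `t ^ 2`. -/
lemma exp_sub_scale (t x : ℝ) (ht0 : 0 ≤ t) (ht1 : t ≤ 1) (hx : 0 ≤ x) :
    Real.exp (t * x) - 1 - t * x ≤ t ^ 2 * (Real.exp x - 1 - x) := by
  have key : ∀ y : ℝ, HasSum (fun k : ℕ => y ^ (k + 2) / ((k + 2).factorial : ℝ))
      (Real.exp y - 1 - y) := by
    intro y
    have h := NormedSpace.expSeries_div_hasSum_exp (𝔸 := ℝ) y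
    rw [← Real.exp_eq_exp_ℝ] at h
    have h2 := (hasSum_nat_add_iff' 2).mpr h
    have e : Real.exp y - ∑ i ∈ Finset.range 2, y ^ i / (i.factorial : ℝ)
        = Real.exp y - 1 - y := by
      simp [Finset.sum_range_succ]
      ring
    rwa [e] at h2
  refine hasSum_le (fun k => ?_) (key (t * x)) ((key x).mul_left (t ^ 2))
  have hk : t ^ k ≤ 1 := pow_le_one₀ ht0 ht1
  have hz : 0 ≤ t ^ 2 * (x ^ (k + 2) / ((k + 2).factorial : ℝ)) := by positivity
  calc (t * x) ^ (k + 2) / ((k + 2).factorial : ℝ)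
      = t ^ k * (t ^ 2 * (x ^ (k + 2) / ((k + 2).factorial : ℝ))) := by ring
    _ ≤ 1 * (t ^ 2 * (x ^ (k + 2) / ((k + 2).factorial : ℝ))) := by gcongr
    _ = _ := one_mul _

lemma sum_exp_eq_bernMgf_pow {Θ : Type*} [Fintype Θ] [DecidableEq Θ]
    (p : Θ → ℝ) (hp1 : ∑ θ, p θ = 1) (q : ℕ) (θ : Θ) (l : ℝ) :
    ∑ x : Fin q → Θ, (∏ j, p (x j)) *
      Real.exp (l * (((univ.filter (fun j => x j = θ)).card : ℝ) - q * p θ))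
      = bernMgf (p θ) l ^ q := by
  have h1 : bernMgf (p θ) l
      = ∑ a, p a * Real.exp (l * ((if a = θ then 1 else 0) - p θ)) := by
    have hs : ∑ a ∈ univ.erase θ, p a = 1 - p θ := by
      rw [← hp1, ← Finset.add_sum_erase univ p (mem_univ θ)]; ring
    rw [← Finset.add_sum_erase univ _ (mem_univ θ), bernMgf, ← hs, Finset.sum_mul]
    congr 1
    · simp [hs]
    · refine Finset.sum_congr rfl fun a ha => ?_
      simp [Finset.ne_of_mem_erase ha]
  rw [h1, Fintype.sum_pow]
  refine Finset.sum_congr rfl fun x _ => ?_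
  rw [Finset.prod_mul_distrib, ← Real.exp_sum, ← Finset.mul_sum, Finset.sum_sub_distrib]
  simp

/-- The two-sided exponential Markov inequality for the empirical frequency of `θ`. -/
lemma chernoff_two_sided {Θ : Type*} [Fintype Θ] [DecidableEq Θ]
    (p : Θ → ℝ) (hp0 : ∀ θ, 0 ≤ p θ) (hp1 : ∑ θ, p θ = 1)
    (q : ℕ) (hq : 0 < q) (θ : Θ) (t l A : ℝ) (hl : 0 ≤ l)
    (h₁ : bernMgf (p θ) l ≤ Real.exp A) (h₂ : bernMgf (p θ) (-l) ≤ Real.exp A) :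
    ∑ x ∈ univ.filter (fun x : Fin q → Θ =>
        t ≤ |((univ.filter (fun j => x j = θ)).card : ℝ) / q - p θ|),
      ∏ j, p (x j) ≤ 2 * Real.exp (q * (A - l * t)) := by
  have hq' : (0 : ℝ) < q := by exact_mod_cast hq
  have hle1 : p θ ≤ 1 := hp1 ▸ Finset.single_le_sum (fun a _ => hp0 a) (mem_univ θ)
  have hnn : ∀ m, 0 ≤ bernMgf (p θ) m := fun m =>
    add_nonneg (mul_nonneg (hp0 θ) (Real.exp_pos _).le)
      (mul_nonneg (by linarith) (Real.exp_pos _).le)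
  let D : (Fin q → Θ) → ℝ := fun x => ((univ.filter (fun j => x j = θ)).card : ℝ) - q * p θ
  have hP : ∀ x : Fin q → Θ, 0 ≤ ∏ j, p (x j) := fun x => Finset.prod_nonneg fun j _ => hp0 _
  calc _ ≤ ∑ x ∈ univ.filter (fun x : Fin q → Θ =>
        t ≤ |((univ.filter (fun j => x j = θ)).card : ℝ) / q - p θ|),
        (∏ j, p (x j)) * (Real.exp (-(q * (l * t))) *
          (Real.exp (l * D x) + Real.exp (-l * D x))) := by
        refine Finset.sum_le_sum fun x hx => le_mul_of_one_le_right (hP x) ?_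
        have hx' := (Finset.mem_filter.mp hx).2
        have hD : ((univ.filter (fun j => x j = θ)).card : ℝ) / q - p θ = D x / q := by
          simp only [D]; field_simp
        rw [hD, abs_div, abs_of_pos hq', le_div_iff₀ hq'] at hx'
        rw [mul_add, ← Real.exp_add, ← Real.exp_add]
        have hmul := mul_le_mul_of_nonneg_left hx' hl
        have a1 := Real.exp_pos (-(q * (l * t)) + l * D x)
        have a2 := Real.exp_pos (-(q * (l * t)) + -l * D x)
        rcases abs_cases (D x) with ⟨h, _⟩ | ⟨h, _⟩ <;> rw [h] at hmul
        · have : 1 ≤ Real.exp (-(q * (l * t)) + l * D x) :=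
            Real.one_le_exp (by linarith)
          linarith
        · have : 1 ≤ Real.exp (-(q * (l * t)) + -l * D x) :=
            Real.one_le_exp (by linarith)
          linarith
    _ ≤ ∑ x : Fin q → Θ, (∏ j, p (x j)) * (Real.exp (-(q * (l * t))) *
          (Real.exp (l * D x) + Real.exp (-l * D x))) := by
        refine Finset.sum_le_sum_of_subset_of_nonneg (Finset.filter_subset _ _) fun x _ _ => ?_
        have := hP x
        positivity
    _ = Real.exp (-(q * (l * t))) * (bernMgf (p θ) l ^ q + bernMgf (p θ) (-l) ^ q) := by
        rw [← sum_exp_eq_bernMgf_pow p hp1, ← sum_exp_eq_bernMgf_pow p hp1,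
          ← Finset.sum_add_distrib, Finset.mul_sum]
        refine Finset.sum_congr rfl fun x _ => ?_
        simp only [D]
        ring
    _ ≤ Real.exp (-(q * (l * t))) * (Real.exp A ^ q + Real.exp A ^ q) := by
        have := hnn l
        have := hnn (-l)
        gcongr
    _ = _ := by
        rw [← Real.exp_nat_mul, ← two_mul, mul_left_comm, ← Real.exp_add]
        ring_nf

theorem empirical_distribution_concentration {Θ : Type*} [Fintype Θ] [DecidableEq Θ]
    (p : Θ → ℝ) (hp0 : ∀ θ, 0 ≤ p θ) (hp1 : ∑ θ, p θ = 1)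
    (ε α : ℝ) (hε : 0 < ε) (hα : α ∈ Set.Ioc (0 : ℝ) 1)
    (q : ℕ) (hq : 0 < q) (hq2 : 32 * Real.log (4 / α) / ε ^ 2 ≤ q)
    (θ : Θ) :
    ∑ x ∈ univ.filter (fun x : Fin q → Θ =>
        ε / 4 ≤ |((univ.filter (fun j => x j = θ)).card : ℝ) / q - p θ|),
      ∏ j, p (x j) ≤ α / 2 * p θ := by
  obtain ⟨hα0, hα1⟩ := hα
  have hq' : (0 : ℝ) < q := by exact_mod_cast hq
  have hle1 : p θ ≤ 1 := hp1 ▸ Finset.single_le_sum (fun a _ => hp0 a) (mem_univ θ)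
  obtain ⟨t, ht⟩ : ∃ t, t = ε / 4 := ⟨_, rfl⟩
  have ht0 : 0 < t := by rw [ht]; positivity
  rw [← ht]
  rw [div_le_iff₀ (by positivity)] at hq2
  have hs : 2 * Real.log (4 / α) ≤ q * t ^ 2 := by rw [ht]; nlinarith
  rcases (hp0 θ).eq_or_lt with h0 | hpos
  · -- A profile in the event contains `θ`, which has probability zero.
    rw [← h0, mul_zero]
    refine (Finset.sum_eq_zero fun x hx => ?_).le
    have hx' := (Finset.mem_filter.mp hx).2
    by_contra hne
    have : univ.filter (fun j => x j = θ) = ∅ := by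
      refine Finset.filter_eq_empty_iff.mpr fun j _ hj => hne ?_
      exact Finset.prod_eq_zero (mem_univ j) (by rw [hj, ← h0])
    simp [this] at hx'
    linarith
  by_cases ht1 : 1 < t
  · -- Two numbers in `[0, 1]` differ by at most one, so the event is empty.
    rw [Finset.filter_false_of_mem, Finset.sum_empty]
    · positivity
    intro x _ hx
    have hc : ((univ.filter (fun j => x j = θ)).card : ℝ) / q ≤ 1 := by
      rw [div_le_one hq']
      exact_mod_cast (Finset.card_le_univ _).trans (by simp)
    have hc0 : 0 ≤ ((univ.filter (fun j => x j = θ)).card : ℝ) / q := by positivity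
    have : |((univ.filter (fun j => x j = θ)).card : ℝ) / q - p θ| ≤ 1 :=
      abs_le.mpr ⟨by linarith, by linarith⟩
    linarith
  push Not at ht1
  have hs2 : 2 ≤ q * t ^ 2 := by
    have : 1 ≤ Real.log (4 / α) := by
      rw [Real.le_log_iff_exp_le (by positivity)]
      have : (4 : ℝ) ≤ 4 / α := by rw [le_div_iff₀ hα0]; linarith
      linarith [Real.exp_one_lt_d9]
    linarith
  obtain ⟨L, hL⟩ : ∃ L, L = -Real.log (p θ) := ⟨_, rfl⟩
  have hpL : p θ = Real.exp (-L) := by rw [hL, neg_neg, Real.exp_log hpos]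
  have hL0 : 0 ≤ L := by have := Real.log_nonpos hpos.le hle1; linarith
  have hfin : ∀ E : ℝ, E ≤ -(q * t ^ 2 / 2 + L) → 2 * Real.exp E ≤ α / 2 * p θ := by
    intro E hE
    have h1 : Real.exp (-(q * t ^ 2 / 2)) ≤ α / 4 := by
      rw [← Real.le_log_iff_exp_le (by positivity)]
      have : Real.log (α / 4) = -Real.log (4 / α) := by rw [← Real.log_inv, inv_div]
      linarith
    calc 2 * Real.exp E ≤ 2 * Real.exp (-(q * t ^ 2 / 2) + -L) := by
          gcongr; linarith
      _ = 2 * Real.exp (-(q * t ^ 2 / 2)) * p θ := by rw [Real.exp_add, hpL]; ring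
      _ ≤ 2 * (α / 4) * p θ := by gcongr
      _ = _ := by ring
  rcases le_total L 3 with h3 | h3
  · refine (chernoff_two_sided p hp0 hp1 q hq θ t (4 * t) ((4 * t) ^ 2 / 8) (by positivity)
      (bernMgf_le_hoeffding _ _ (hp0 θ) hle1) ?_).trans (hfin _ (by nlinarith))
    simpa only [neg_sq] using bernMgf_le_hoeffding (p θ) (-(4 * t)) (hp0 θ) hle1
  · have hA : p θ * (Real.exp (t * L) - 1 - t * L) ≤ t ^ 2 := by
      have h := exp_sub_scale t L ht0.le ht1 hL0
      have hpe : p θ * Real.exp L = 1 := by rw [hpL, ← Real.exp_add]; simp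
      calc _ ≤ p θ * (t ^ 2 * (Real.exp L - 1 - L)) := by gcongr
        _ = t ^ 2 * (p θ * Real.exp L) - t ^ 2 * (p θ * (1 + L)) := by ring
        _ ≤ t ^ 2 := by
          rw [hpe, mul_one]
          have : 0 ≤ t ^ 2 * (p θ * (1 + L)) := by positivity
          linarith
    have hl : 0 ≤ t * L := by positivity
    refine (chernoff_two_sided p hp0 hp1 q hq θ t (t * L) (t ^ 2) hl
      ((bernMgf_le_poisson _ _).trans (Real.exp_le_exp.mpr hA))
      ((bernMgf_le_poisson _ _).trans (Real.exp_le_exp.mpr (le_trans ?_ hA)))).trans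
      (hfin _ (by nlinarith))
    -- The lower tail reduces to the upper one by `y ≤ sinh y` for `y ≥ 0`.
    have hsinh := Real.self_le_sinh_iff.mpr hl
    rw [Real.sinh_eq] at hsinh
    exact mul_le_mul_of_nonneg_left (by linarith) (hp0 θ)
end
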